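/- Let K be any field, and let G_40 ⊆ S_8 be the subgroup of order 192 generated by (1,5)(2,6), σ_1 = (1,2)(3,4)(5,6)(7,8), φ̃_1 = (2,3,4)(6,7,8), and (1,5)(3,4)(7,8). Then the fixed field K(x_1,…,x_8)^{G_40} is K-rational. -/

import Mathlib

noncomputable section

/-- The rational function field `K(x_i : i ∈ I)` over `K`, realized as the fraction field
of the multivariate polynomial ring. -/
abbrev RFF (K : Type) [Field K] (I : Type) := FractionRing (MvPolynomial I K)

/-- The image of the variable `x_i` in the rational function field `K(x_i : i ∈ I)`. -/
noncomputable def Xvar (K : Type) [Field K] (I : Type) (i : I) : RFF K I :=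
  algebraMap (MvPolynomial I K) (RFF K I) (MvPolynomial.X i)

/-- Permutations of the variables as `K`-algebra automorphisms of the polynomial ring. -/
def renameHom (K : Type) [Field K] (I : Type) :
    Equiv.Perm I →* (MvPolynomial I K ≃ₐ[K] MvPolynomial I K) where
  toFun σ := MvPolynomial.renameEquiv K σ
  map_one' := MvPolynomial.renameEquiv_refl K
  map_mul' σ τ := (MvPolynomial.renameEquiv_trans K τ σ).symm

/-- The action of permutations of the variables on `K(x_i : i ∈ I)` by `K`-automorphisms,
determined by `σ(x_i) = x_{σ(i)}`. -/
noncomputable def permHom (K : Type) [Field K] (I : Type) :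
    Equiv.Perm I →* (RFF K I ≃ₐ[K] RFF K I) :=
  (IsFractionRing.fieldEquivOfAlgEquivHom K (RFF K I)).comp (renameHom K I)

/-- The fixed field `K(x_i : i ∈ I)^G` of a group `G` of permutations of the variables. -/
noncomputable def fixedSub (K : Type) [Field K] (I : Type) (G : Subgroup (Equiv.Perm I)) :
    IntermediateField K (RFF K I) :=
  IntermediateField.fixedField (G.map (permHom K I))

/-- An extension `L/K` is `K`-rational if it is purely transcendental over `K`, i.e. generated
by finitely many algebraically independent elements. -/
def IsRatExt (K : Type) [Field K] (L : Type*) [Field L] [Algebra K L] : Prop :=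
  ∃ (n : ℕ) (t : Fin n → L), AlgebraicIndependent K t ∧
    IntermediateField.adjoin K (Set.range t) = ⊤

section General
variable {K : Type} [Field K]

theorem permHom_X (σ : Equiv.Perm (Fin 8)) (i : Fin 8) :
    permHom K (Fin 8) σ (Xvar K (Fin 8) i) = Xvar K (Fin 8) (σ i) := by
  simp [permHom, Xvar, renameHom, IsFractionRing.fieldEquivOfAlgEquivHom_apply]

theorem Xvar_inj : Function.Injective (Xvar K (Fin 8)) := by
  intro i j h
  exact MvPolynomial.X_injective (IsFractionRing.injective (MvPolynomial (Fin 8) K) _ h)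

theorem permHom_inj : Function.Injective (permHom K (Fin 8)) := by
  intro σ τ h
  ext i
  have := congrArg (fun e => e (Xvar K (Fin 8) i)) h
  simp only [permHom_X] at this
  exact congrArg _ (Xvar_inj this)

/-- a polynomial with a nonzero value is nonzero in the fraction field. -/
theorem ne_zero_of_eval (p : MvPolynomial (Fin 8) K) (a : Fin 8 → K)
    (h : MvPolynomial.eval a p ≠ 0) :
    algebraMap (MvPolynomial (Fin 8) K) (RFF K (Fin 8)) p ≠ 0 := by
  intro h0
  have : p = 0 := (IsFractionRing.injective (MvPolynomial (Fin 8) K) (RFF K (Fin 8)))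
    (by simpa using h0)
  simp [this] at h

theorem eq_top_of_X (A : IntermediateField K (RFF K (Fin 8)))
    (h : ∀ i, Xvar K (Fin 8) i ∈ A) : A = ⊤ := by
  rw [eq_top_iff]
  intro z _
  obtain ⟨p, q, -, rfl⟩ := IsFractionRing.div_surjective (A := MvPolynomial (Fin 8) K) z
  have key : ∀ p : MvPolynomial (Fin 8) K, algebraMap _ (RFF K (Fin 8)) p ∈ A := by
    intro p
    induction p using MvPolynomial.induction_on with
    | C a =>
      have := A.algebraMap_mem a
      rwa [IsScalarTower.algebraMap_apply K (MvPolynomial (Fin 8) K) (RFF K (Fin 8))] at this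
    | add p q hp hq => rw [map_add]; exact A.add_mem hp hq
    | mul_X p i hp => rw [map_mul]; exact A.mul_mem hp (h i)
  exact A.div_mem (key p) (key q)

variable {L : Type} [Field L] [Algebra K L]

theorem rank_base (A : IntermediateField K L) (h : A = ⊤) : Module.rank A L ≤ (1 : ℕ) := by
  subst h
  rw [IntermediateField.rank_top]; simp

theorem rank_step (A : IntermediateField K L) (x : L) (n m : ℕ) (c : Fin n → L)
    (hc : ∀ i, c i ∈ A) (h : x ^ n = ∑ i, c i * x ^ (i : ℕ))
    (H : ∀ B : IntermediateField K L, A ≤ B → x ∈ B → Module.rank B L ≤ (m : ℕ)) :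
    Module.rank A L ≤ ((n * m : ℕ) : Cardinal) := by
  classical
  have hA : A ≤ (IntermediateField.adjoin A {x}).restrictScalars K := by
    intro a ha
    exact (IntermediateField.adjoin A {x}).algebraMap_mem ⟨a, ha⟩
  have h1 : Module.rank (IntermediateField.adjoin A {x}) L ≤ (m : ℕ) :=
    H ((IntermediateField.adjoin A {x}).restrictScalars K) hA
      (IntermediateField.mem_adjoin_simple_self A x)
  let p : Polynomial A := ∑ i : Fin n, Polynomial.C (⟨c i, hc i⟩ : A) * Polynomial.X ^ (i : ℕ)
  have hp : p.degree < n := by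
    refine lt_of_le_of_lt (Polynomial.degree_sum_le _ _) ?_
    refine (Finset.sup_lt_iff (WithBot.bot_lt_coe n)).2 ?_
    intro i _
    refine lt_of_le_of_lt (Polynomial.degree_C_mul_X_pow_le _ _) ?_
    exact WithBot.coe_lt_coe.2 i.2
  have hm : (Polynomial.X ^ n - p).Monic := Polynomial.monic_X_pow_sub hp
  have hroot : Polynomial.aeval x (Polynomial.X ^ n - p) = 0 := by
    simp only [map_sub, map_pow, Polynomial.aeval_X, p, map_sum, map_mul, Polynomial.aeval_C, h]
    exact sub_self _
  have hintg : IsIntegral A x := ⟨_, hm, hroot⟩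
  have hdeg : (Polynomial.X ^ n - p).natDegree = n := by
    rw [Polynomial.natDegree_sub_eq_left_of_natDegree_lt, Polynomial.natDegree_X_pow]
    rw [Polynomial.natDegree_X_pow]
    by_cases h0 : p = 0
    · rw [h0] at hroot ⊢
      rcases Nat.eq_zero_or_pos n with rfl | hn
      · simp at hroot
      · simpa using hn
    · exact (Polynomial.natDegree_lt_iff_degree_lt h0).2 hp
  have h2 : Module.rank A (IntermediateField.adjoin A {x}) ≤ (n : ℕ) := by
    have : FiniteDimensional A (IntermediateField.adjoin A {x}) :=
      IntermediateField.adjoin.finiteDimensional hintg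
    rw [← Module.finrank_eq_rank, IntermediateField.adjoin.finrank hintg]
    have := Polynomial.natDegree_le_of_dvd (minpoly.dvd A x hroot) hm.ne_zero
    rw [hdeg] at this
    exact_mod_cast this
  rw [← rank_mul_rank A (IntermediateField.adjoin A {x}) L, Nat.cast_mul]
  exact mul_le_mul' h2 h1

theorem trdeg_RFF : Algebra.trdeg K (RFF K (Fin 8)) = 8 := by
  have : Algebra.IsAlgebraic (MvPolynomial (Fin 8) K) (RFF K (Fin 8)) :=
    IsLocalization.isAlgebraic _ (nonZeroDivisors (MvPolynomial (Fin 8) K))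
  have h2 := (IsTranscendenceBasis.mvPolynomial (Fin 8) K).algebraMap_comp (A := RFF K (Fin 8))
  rw [← h2.cardinalMk_eq_trdeg]; simp

open IntermediateField.algebraAdjoinAdjoin in
theorem main_reduction (G : Subgroup (Equiv.Perm (Fin 8))) (hG : 192 ≤ Nat.card G)
    (t : Fin 8 → RFF K (Fin 8)) (ht : ∀ i, t i ∈ fixedSub K (Fin 8) G)
    (hr : Module.rank (IntermediateField.adjoin K (Set.range t)) (RFF K (Fin 8)) ≤ (192 : ℕ)) :
    IsRatExt K (fixedSub K (Fin 8) G) := by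
  classical
  set F := IntermediateField.adjoin K (Set.range t) with hF
  have hfin : FiniteDimensional F (RFF K (Fin 8)) := by
    rw [FiniteDimensional, ← Module.rank_lt_aleph0_iff]
    exact lt_of_le_of_lt hr Cardinal.natCast_lt_aleph0
  have hle : F ≤ fixedSub K (Fin 8) G := by
    rw [hF, IntermediateField.adjoin_le_iff]
    rintro _ ⟨i, rfl⟩
    exact ht i
  have hcard : Module.finrank (fixedSub K (Fin 8) G) (RFF K (Fin 8)) = Nat.card G := by
    have : Finite (G.map (permHom K (Fin 8))) :=
      Finite.of_equiv G (G.equivMapOfInjective _ (permHom_inj (K := K))).toEquiv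
    have := Fintype.ofFinite (G.map (permHom K (Fin 8)))
    have h1 := FixedPoints.finrank_eq_card (G.map (permHom K (Fin 8))) (RFF K (Fin 8))
    rw [← Nat.card_eq_fintype_card] at h1
    rw [Nat.card_congr (G.equivMapOfInjective _ (permHom_inj (K := K))).toEquiv, ← h1]
    rfl
  have heq : F = fixedSub K (Fin 8) G := by
    apply IntermediateField.eq_of_le_of_finrank_le' hle
    rw [hcard]
    refine le_trans ?_ hG
    exact Module.finrank_le_of_rank_le hr
  have hti : AlgebraicIndependent K t := by
    have halg : Algebra.IsAlgebraic F (RFF K (Fin 8)) := inferInstance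
    have : Algebra.IsAlgebraic (Algebra.adjoin K (Set.range t)) (RFF K (Fin 8)) := by
      have : IsFractionRing (Algebra.adjoin K (Set.range t)) F :=
        inferInstance
      have : Algebra.IsAlgebraic (Algebra.adjoin K (Set.range t)) F :=
        IsLocalization.isAlgebraic _ (nonZeroDivisors (Algebra.adjoin K (Set.range t)))
      exact Algebra.IsAlgebraic.trans _ F _
    exact (Algebra.IsAlgebraic.isTranscendenceBasis_of_le_trdeg_of_finite K t
      (by rw [trdeg_RFF]; simp)).1
  refine ⟨8, fun i => ⟨t i, ht i⟩, ?_, ?_⟩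
  · exact AlgebraicIndependent.of_comp (fixedSub K (Fin 8) G).val hti
  · apply IntermediateField.lift_injective
    rw [IntermediateField.lift_adjoin, IntermediateField.lift_top, ← Set.range_comp]
    exact heq
end General
section GroupCard

def gA : Equiv.Perm (Fin 8) := Equiv.swap (0 : Fin 8) 4 * Equiv.swap 1 5
def gB : Equiv.Perm (Fin 8) :=
  Equiv.swap (0 : Fin 8) 1 * Equiv.swap 2 3 * Equiv.swap 4 5 * Equiv.swap 6 7
def gC : Equiv.Perm (Fin 8) :=
  (Equiv.swap (1 : Fin 8) 2 * Equiv.swap 2 3) * (Equiv.swap (5 : Fin 8) 6 * Equiv.swap 6 7)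
def gD : Equiv.Perm (Fin 8) := Equiv.swap (0 : Fin 8) 4 * Equiv.swap 2 3 * Equiv.swap 6 7

def rep1 : Fin 8 → Equiv.Perm (Fin 8) :=
  ![1, gB, gC * gB, gB * gC * gB, gA, gA * gB, gC * gA * gB, gB * gC * gA * gB]
def rep2 : Fin 6 → Equiv.Perm (Fin 8) :=
  ![1, gC, gC * gC, gA * gD, gA * gC * gA, gD * gC * gA]
def rep3 : Fin 4 → Equiv.Perm (Fin 8) :=
  ![1, gC * gA * gD * gC, gC * gA * gC * gA * gC, gC * gC * gA * gC * gD]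

theorem rep1_zero : ∀ i, rep1 i 0 = i := by decide
theorem rep2_zero : ∀ i, rep2 i 0 = 0 := by decide
theorem rep3_zero : ∀ i, rep3 i 0 = 0 := by decide
theorem rep2_one : ∀ i j, rep2 i 1 = rep2 j 1 → i = j := by decide
theorem rep3_one : ∀ i, rep3 i 1 = 1 := by decide
theorem rep3_two : ∀ i j, rep3 i 2 = rep3 j 2 → i = j := by decide

theorem card_ge (G : Subgroup (Equiv.Perm (Fin 8))) (hA : gA ∈ G) (hB : gB ∈ G) (hC : gC ∈ G)
    (hD : gD ∈ G) : 192 ≤ Nat.card G := by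
  have m1 : ∀ i, rep1 i ∈ G := by
    intro i
    unfold rep1
    generalize gA = a at *
    generalize gB = b at *
    generalize gC = c at *
    generalize gD = d at *
    fin_cases i <;> simp <;> (repeat' first | assumption | refine mul_mem ?_ ?_)
  have m2 : ∀ i, rep2 i ∈ G := by
    intro i
    unfold rep2
    generalize gA = a at *
    generalize gB = b at *
    generalize gC = c at *
    generalize gD = d at *
    fin_cases i <;> simp <;> (repeat' first | assumption | refine mul_mem ?_ ?_)
  have m3 : ∀ i, rep3 i ∈ G := by
    intro i
    unfold rep3
    generalize gA = a at *
    generalize gB = b at *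
    generalize gC = c at *
    generalize gD = d at *
    fin_cases i <;> simp <;> (repeat' first | assumption | refine mul_mem ?_ ?_)
  let f : Fin 8 × Fin 6 × Fin 4 → G := fun p =>
    ⟨rep1 p.1 * rep2 p.2.1 * rep3 p.2.2, mul_mem (mul_mem (m1 _) (m2 _)) (m3 _)⟩
  have hf : Function.Injective f := by
    rintro ⟨i, j, k⟩ ⟨i', j', k'⟩ h
    have h : rep1 i * rep2 j * rep3 k = rep1 i' * rep2 j' * rep3 k' := congrArg Subtype.val h
    have h0 := congrArg (fun e => e 0) h
    simp only [Equiv.Perm.mul_apply, rep3_zero, rep2_zero, rep1_zero] at h0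
    subst h0
    rw [mul_assoc, mul_assoc] at h
    have h := mul_left_cancel h
    have h1 := congrArg (fun e => e 1) h
    simp only [Equiv.Perm.mul_apply, rep3_one] at h1
    have h1 := rep2_one _ _ h1
    subst h1
    have h := mul_left_cancel h
    have h2 := rep3_two _ _ (congrArg (fun e => e 2) h)
    subst h2
    rfl
  have := Nat.card_le_card_of_injective f hf
  simpa using this

def GG : Subgroup (Equiv.Perm (Fin 8)) := Subgroup.closure {gA, gB, gC, gD}

theorem card_GG : 192 ≤ Nat.card GG := by
  apply card_ge
  · exact Subgroup.subset_closure (Or.inl rfl)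
  · exact Subgroup.subset_closure (Or.inr (Or.inl rfl))
  · exact Subgroup.subset_closure (Or.inr (Or.inr (Or.inl rfl)))
  · exact Subgroup.subset_closure (Or.inr (Or.inr (Or.inr rfl)))

variable {K : Type} [Field K]

theorem mem_fixed (t : RFF K (Fin 8))
    (hA : permHom K (Fin 8) gA t = t) (hB : permHom K (Fin 8) gB t = t)
    (hC : permHom K (Fin 8) gC t = t) (hD : permHom K (Fin 8) gD t = t) :
    t ∈ fixedSub K (Fin 8) GG := by
  rw [fixedSub, IntermediateField.mem_fixedField_iff]
  rintro _ ⟨σ, hσ, rfl⟩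
  unfold GG at hσ
  generalize gA = a at *
  generalize gB = b at *
  generalize gC = c at *
  generalize gD = d at *
  induction hσ using Subgroup.closure_induction with
  | mem x hx => rcases hx with rfl | rfl | rfl | rfl <;> assumption
  | one => simp
  | mul x y _ _ hx hy => rw [map_mul, AlgEquiv.mul_apply, hy, hx]
  | inv x _ hx =>
    rw [map_inv]
    exact (AlgEquiv.symm_apply_eq _).2 hx.symm

/-- Invariance of a function of the eight variables under the four generators. -/
theorem mem_fixed' (f : (Fin 8 → RFF K (Fin 8)) → RFF K (Fin 8))
    (hf : ∀ (φ : RFF K (Fin 8) ≃ₐ[K] RFF K (Fin 8)) x, φ (f x) = f (fun i => φ (x i)))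
    (h : ∀ x : Fin 8 → RFF K (Fin 8), x = Xvar K (Fin 8) →
      f ![x 4, x 5, x 2, x 3, x 0, x 1, x 6, x 7] = f x ∧
      f ![x 1, x 0, x 3, x 2, x 5, x 4, x 7, x 6] = f x ∧
      f ![x 0, x 2, x 3, x 1, x 4, x 6, x 7, x 5] = f x ∧
      f ![x 4, x 1, x 3, x 2, x 0, x 5, x 7, x 6] = f x) :
    f (Xvar K (Fin 8)) ∈ fixedSub K (Fin 8) GG := by
  obtain ⟨h1, h2, h3, h4⟩ := h (Xvar K (Fin 8)) rfl
  apply mem_fixed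
  · rw [hf]; conv_rhs => rw [← h1]
    congr 1; ext1 i; rw [permHom_X]; fin_cases i <;> rfl
  · rw [hf]; conv_rhs => rw [← h2]
    congr 1; ext1 i; rw [permHom_X]; fin_cases i <;> rfl
  · rw [hf]; conv_rhs => rw [← h3]
    congr 1; ext1 i; rw [permHom_X]; fin_cases i <;> rfl
  · rw [hf]; conv_rhs => rw [← h4]
    congr 1; ext1 i; rw [permHom_X]; fin_cases i <;> rfl

end GroupCard
section Algebra

variable {K : Type} [Field K] {L : Type} [Field L] [Algebra K L]

theorem rank24 (A : IntermediateField K L) (u1 u2 u3 u4 : L) (m : ℕ)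
    (h1 : u1 + u2 + u3 + u4 ∈ A)
    (h2 : u1 * u2 + u1 * u3 + u1 * u4 + u2 * u3 + u2 * u4 + u3 * u4 ∈ A)
    (h3 : u1 * u2 * u3 + u1 * u2 * u4 + u1 * u3 * u4 + u2 * u3 * u4 ∈ A)
    (h4 : u1 * u2 * u3 * u4 ∈ A)
    (H : ∀ B : IntermediateField K L, A ≤ B → u1 ∈ B → u2 ∈ B → u3 ∈ B → u4 ∈ B →
      Module.rank B L ≤ (m : ℕ)) :
    Module.rank A L ≤ ((24 * m : ℕ) : Cardinal) := by
  have : 24 * m = 4 * (3 * (2 * m)) := by ring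
  rw [this]
  refine rank_step A u1 4 _ ![-(u1 * u2 * u3 * u4),
    u1 * u2 * u3 + u1 * u2 * u4 + u1 * u3 * u4 + u2 * u3 * u4,
    -(u1 * u2 + u1 * u3 + u1 * u4 + u2 * u3 + u2 * u4 + u3 * u4), u1 + u2 + u3 + u4] ?_ ?_ ?_
  · intro i
    fin_cases i
    · exact neg_mem h4
    · exact h3
    · exact neg_mem h2
    · exact h1
  · simp [Fin.sum_univ_four]; ring
  intro B hB hu1
  have k1 : u2 + u3 + u4 ∈ B := by
    have := sub_mem (hB h1) hu1
    convert this using 1; ring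
  have k2 : u2 * u3 + u2 * u4 + u3 * u4 ∈ B := by
    have := sub_mem (hB h2) (mul_mem hu1 k1)
    convert this using 1; ring
  have k3 : u2 * u3 * u4 ∈ B := by
    have := sub_mem (hB h3) (mul_mem hu1 k2)
    convert this using 1; ring
  refine rank_step B u2 3 _ ![u2 * u3 * u4, -(u2 * u3 + u2 * u4 + u3 * u4), u2 + u3 + u4] ?_ ?_ ?_
  · intro i
    fin_cases i
    · exact k3
    · exact neg_mem k2
    · exact k1
  · simp [Fin.sum_univ_three]; ring
  intro B' hB' hu2
  have k1' : u3 + u4 ∈ B' := by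
    have := sub_mem (hB' k1) hu2
    convert this using 1; ring
  have k2' : u3 * u4 ∈ B' := by
    have := sub_mem (hB' k2) (mul_mem hu2 k1')
    convert this using 1; ring
  refine rank_step B' u3 2 _ ![-(u3 * u4), u3 + u4] ?_ ?_ ?_
  · intro i
    fin_cases i
    · exact neg_mem k2'
    · exact k1'
  · simp [Fin.sum_univ_two]; ring
  intro C hC hu3
  refine H C (hB.trans (hB'.trans hC)) (hC (hB' hu1)) (hC hu2) hu3 ?_
  have := sub_mem (hC k1') hu3
  convert this using 1; ring

theorem rank8 (A : IntermediateField K L) (v1 v2 v3 p1 p2 p3 q1 q2 q3 : L)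
    (hp1 : p1 ∈ A) (hp2 : p2 ∈ A) (hp3 : p3 ∈ A)
    (hq1 : q1 ∈ A) (hq2 : q2 ∈ A) (hq3 : q3 ∈ A)
    (h1 : v1 ^ 2 = q1 + p1 * v1) (h2 : v2 ^ 2 = q2 + p2 * v2) (h3 : v3 ^ 2 = q3 + p3 * v3)
    (H : ∀ B : IntermediateField K L, A ≤ B → v1 ∈ B → v2 ∈ B → v3 ∈ B → B = ⊤) :
    Module.rank A L ≤ ((8 : ℕ) : Cardinal) := by
  have : 8 = 2 * (2 * (2 * 1)) := by norm_num
  rw [this]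
  refine rank_step A v1 2 _ ![q1, p1] ?_ (by simpa [Fin.sum_univ_two] using h1) ?_
  · intro i; fin_cases i <;> assumption
  intro B hB hv1
  refine rank_step B v2 2 _ ![q2, p2] ?_ (by simpa [Fin.sum_univ_two] using h2) ?_
  · intro i
    fin_cases i
    · exact hB hq2
    · exact hB hp2
  intro C hC hv2
  refine rank_step C v3 2 _ ![q3, p3] ?_ (by simpa [Fin.sum_univ_two] using h3) ?_
  · intro i
    fin_cases i
    · exact hC (hB hq3)
    · exact hC (hB hp3)
  intro D hD hv3
  exact rank_base D (H D (hB.trans (hC.trans hD)) (hD (hC hv1)) (hD hv2) hv3)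

/-- The norm of `r2 T^2 + r1 T + r0` modulo the cubic `T^3 + g2 T^2 + g1 T + g0`. -/
def N3 {L : Type} [CommRing L] (g0 g1 g2 r0 r1 r2 : L) : L :=
  Matrix.det !![r0, -g0 * r2, -g0 * r1 + g0 * g2 * r2;
     r1, r0 - g1 * r2, -g1 * r1 + (g1 * g2 - g0) * r2;
     r2, r1 - g2 * r2, r0 - g2 * r1 + (g2 ^ 2 - g1) * r2]

theorem N3_eq (g0 g1 g2 l u1 u2 u3 u4 : L) (hl : l = -(u1 + u2 + u3 + u4) - g2) :
    N3 g0 g1 g2 (u1 * u2 * u3 * u4 - l * g0)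
      (-(u1 * u2 * u3 + u1 * u2 * u4 + u1 * u3 * u4 + u2 * u3 * u4) - g0 - l * g1)
      ((u1 * u2 + u1 * u3 + u1 * u4 + u2 * u3 + u2 * u4 + u3 * u4) - g1 - l * g2) =
    (u1 ^ 3 + g2 * u1 ^ 2 + g1 * u1 + g0) * (u2 ^ 3 + g2 * u2 ^ 2 + g1 * u2 + g0)
     * (u3 ^ 3 + g2 * u3 ^ 2 + g1 * u3 + g0) * (u4 ^ 3 + g2 * u4 ^ 2 + g1 * u4 + g0) := by
  subst hl
  let M : L → Matrix (Fin 3) (Fin 3) L := fun u => !![-u, 0, -g0; 1, -u, -g1; 0, 1, -g2 - u]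
  have hM : ∀ u, (M u).det = -(u ^ 3 + g2 * u ^ 2 + g1 * u + g0) := by
    intro u
    simp only [M, Matrix.det_fin_three]
    simp
    ring
  have key : (M u1 * M u2) * (M u3 * M u4) = (M u1 * M u2) * (M u3 * M u4) := rfl
  have h12 : ∀ u v, M u * M v = !![u * v, -g0, g0 * (g2 + u + v);
      -(u + v), u * v - g1, -g0 + g1 * (g2 + u + v);
      1, -(g2 + u + v), u * v - g1 + g2 * (g2 + u + v)] := by
    intro u v
    ext i j
    fin_cases i <;> fin_cases j <;> simp [M, Matrix.mul_apply, Fin.sum_univ_three] <;> ring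
  conv_rhs at key => rw [h12, h12]
  have hd := congrArg Matrix.det key
  rw [Matrix.det_mul, Matrix.det_mul, Matrix.det_mul, hM, hM, hM, hM] at hd
  have e : ∀ a b c d : L, a * b * c * d = -a * -b * (-c * -d) := by intros; ring
  refine Eq.trans ?_ (e _ _ _ _).symm
  rw [hd, N3]
  congr 1
  ext i j
  fin_cases i <;> fin_cases j <;> simp [Matrix.mul_apply, Fin.sum_univ_three] <;> ring

theorem N3_mem (A : IntermediateField K L) (g0 g1 g2 r0 r1 r2 : L) (h0 : g0 ∈ A) (h1 : g1 ∈ A)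
    (h2 : g2 ∈ A) (k0 : r0 ∈ A) (k1 : r1 ∈ A) (k2 : r2 ∈ A) : N3 g0 g1 g2 r0 r1 r2 ∈ A := by
  simp only [N3, Matrix.det_fin_three]
  simp
  repeat' first
    | assumption
    | refine pow_mem ?_ _
    | refine neg_mem ?_
    | refine sub_mem ?_ ?_
    | refine add_mem ?_ ?_
    | refine mul_mem ?_ ?_

theorem N3_smul (g0 g1 g2 r0 r1 r2 y : L) :
    N3 g0 g1 g2 (y * r0) (y * r1) (y * r2) = y ^ 3 * N3 g0 g1 g2 r0 r1 r2 := by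
  simp only [N3, Matrix.det_fin_three]
  simp
  ring

end Algebra
section Char
variable {K : Type} [Field K] {L : Type} [Field L] [Algebra K L]

/-- Characteristic different from 2: the degree bound. -/
theorem ne2_core (A : IntermediateField K L) (u1 u2 u3 u4 v1 v2 v3 v4 : L)
    (c n2 n1 n0 Y g2 g1 g0 l y : L)
    (hc : c = v1 ^ 2 + v2 ^ 2 + v3 ^ 2 + v4 ^ 2)
    (hn2 : n2 = -(v1 ^ 2 * (u2 + u3 + u4) + v2 ^ 2 * (u1 + u3 + u4) + v3 ^ 2 * (u1 + u2 + u4)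
      + v4 ^ 2 * (u1 + u2 + u3)))
    (hn1 : n1 = v1 ^ 2 * (u2 * u3 + u2 * u4 + u3 * u4) + v2 ^ 2 * (u1 * u3 + u1 * u4 + u3 * u4)
      + v3 ^ 2 * (u1 * u2 + u1 * u4 + u2 * u4) + v4 ^ 2 * (u1 * u2 + u1 * u3 + u2 * u3))
    (hn0 : n0 = -(v1 ^ 2 * (u2 * u3 * u4) + v2 ^ 2 * (u1 * u3 * u4) + v3 ^ 2 * (u1 * u2 * u4)
      + v4 ^ 2 * (u1 * u2 * u3)))
    (hY : Y = v1 * v2 * v3 * v4 * ((u1 - u2) * (u1 - u3) * (u1 - u4) * (u2 - u3) * (u2 - u4)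
      * (u3 - u4)))
    (hc0 : c ≠ 0) (hY0 : Y ≠ 0)
    (hg2 : g2 = n2 / c) (hg1 : g1 = n1 / c) (hg0 : g0 = n0 / c)
    (hl : l = -(u1 + u2 + u3 + u4) - g2) (hy : y = Y / c ^ 2)
    (mc : c ∈ A) (m2 : g2 ∈ A) (m1 : g1 ∈ A) (m0 : g0 ∈ A) (ml : l ∈ A)
    (k2 : y⁻¹ * ((u1 * u2 + u1 * u3 + u1 * u4 + u2 * u3 + u2 * u4 + u3 * u4) - g1 - l * g2) ∈ A)
    (k1 : y⁻¹ * (-(u1 * u2 * u3 + u1 * u2 * u4 + u1 * u3 * u4 + u2 * u3 * u4) - g0 - l * g1) ∈ A)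
    (k0 : y⁻¹ * (u1 * u2 * u3 * u4 - l * g0) ∈ A)
    (H : ∀ B : IntermediateField K L, A ≤ B → u1 ∈ B → u2 ∈ B → u3 ∈ B → u4 ∈ B →
      v1 ∈ B → v2 ∈ B → v3 ∈ B → v4 ∈ B → B = ⊤) :
    Module.rank A L ≤ ((192 : ℕ) : Cardinal) := by
  have hy0 : y ≠ 0 := by rw [hy]; exact div_ne_zero hY0 (pow_ne_zero _ hc0)
  have hv : v1 ≠ 0 ∧ v2 ≠ 0 ∧ v3 ≠ 0 ∧ v4 ≠ 0 := by
    refine ⟨?_, ?_, ?_, ?_⟩ <;> (rintro rfl; exact hY0 (by rw [hY]; ring))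
  obtain ⟨hv1, hv2, hv3, hv4⟩ := hv
  have d12 : u1 - u2 ≠ 0 := by intro h; exact hY0 (by rw [hY, h]; ring)
  have d13 : u1 - u3 ≠ 0 := by intro h; exact hY0 (by rw [hY, h]; ring)
  have d14 : u1 - u4 ≠ 0 := by intro h; exact hY0 (by rw [hY, h]; ring)
  have d23 : u2 - u3 ≠ 0 := by intro h; exact hY0 (by rw [hY, h]; ring)
  have d24 : u2 - u4 ≠ 0 := by intro h; exact hY0 (by rw [hY, h]; ring)
  have d34 : u3 - u4 ≠ 0 := by intro h; exact hY0 (by rw [hY, h]; ring)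
  have c2 : c * g2 = n2 := by rw [hg2]; field_simp
  have c1 : c * g1 = n1 := by rw [hg1]; field_simp
  have c0 : c * g0 = n0 := by rw [hg0]; field_simp
  have cg : ∀ u, c * (u ^ 3 + g2 * u ^ 2 + g1 * u + g0) = c * u ^ 3 + n2 * u ^ 2 + n1 * u + n0 := by
    intro u; rw [← c2, ← c1, ← c0]; ring
  have G1 : c * (u1 ^ 3 + g2 * u1 ^ 2 + g1 * u1 + g0)
      = v1 ^ 2 * ((u1 - u2) * (u1 - u3) * (u1 - u4)) := by
    rw [cg, hc, hn2, hn1, hn0]; ring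
  have G2 : c * (u2 ^ 3 + g2 * u2 ^ 2 + g1 * u2 + g0)
      = - (v2 ^ 2 * ((u1 - u2) * (u2 - u3) * (u2 - u4))) := by
    rw [cg, hc, hn2, hn1, hn0]; ring
  have G3 : c * (u3 ^ 3 + g2 * u3 ^ 2 + g1 * u3 + g0)
      = v3 ^ 2 * ((u1 - u3) * (u2 - u3) * (u3 - u4)) := by
    rw [cg, hc, hn2, hn1, hn0]; ring
  have G4 : c * (u4 ^ 3 + g2 * u4 ^ 2 + g1 * u4 + g0)
      = - (v4 ^ 2 * ((u1 - u4) * (u2 - u4) * (u3 - u4))) := by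
    rw [cg, hc, hn2, hn1, hn0]; ring
  have hN := N3_eq g0 g1 g2 l u1 u2 u3 u4 hl
  have hprod : (c * (u1 ^ 3 + g2 * u1 ^ 2 + g1 * u1 + g0)) *
     (c * (u2 ^ 3 + g2 * u2 ^ 2 + g1 * u2 + g0)) * (c * (u3 ^ 3 + g2 * u3 ^ 2 + g1 * u3 + g0)) *
     (c * (u4 ^ 3 + g2 * u4 ^ 2 + g1 * u4 + g0)) = Y ^ 2 := by
    rw [G1, G2, G3, G4, hY]
    generalize u1 - u2 = a12
    generalize u1 - u3 = a13
    generalize u1 - u4 = a14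
    generalize u2 - u3 = a23
    generalize u2 - u4 = a24
    generalize u3 - u4 = a34
    ring
  have hNy : N3 g0 g1 g2 (u1 * u2 * u3 * u4 - l * g0)
      (-(u1 * u2 * u3 + u1 * u2 * u4 + u1 * u3 * u4 + u2 * u3 * u4) - g0 - l * g1)
      ((u1 * u2 + u1 * u3 + u1 * u4 + u2 * u3 + u2 * u4 + u3 * u4) - g1 - l * g2) = y ^ 2 := by
    rw [hN, hy, div_pow, ← hprod, eq_div_iff (by positivity)]
    generalize u1 ^ 3 + g2 * u1 ^ 2 + g1 * u1 + g0 = a1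
    generalize u2 ^ 3 + g2 * u2 ^ 2 + g1 * u2 + g0 = a2
    generalize u3 ^ 3 + g2 * u3 ^ 2 + g1 * u3 + g0 = a3
    generalize u4 ^ 3 + g2 * u4 ^ 2 + g1 * u4 + g0 = a4
    ring
  have my : y ∈ A := by
    have h := N3_mem A _ _ _ _ _ _ m0 m1 m2 k0 k1 k2
    rw [N3_smul, hNy] at h
    have h' := inv_mem h
    convert h' using 1
    field_simp
  have kk : ∀ z, y⁻¹ * z ∈ A → z ∈ A := by
    intro z hz
    have := mul_mem my hz
    rwa [mul_inv_cancel_left₀ hy0] at this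
  have mY : Y ∈ A := by
    have : Y = y * c ^ 2 := by rw [hy]; field_simp
    rw [this]; exact mul_mem my (pow_mem mc _)
  have E1 : u1 + u2 + u3 + u4 ∈ A := by
    have := neg_mem (add_mem ml m2)
    convert this using 1; rw [hl]; ring
  have E2 : u1 * u2 + u1 * u3 + u1 * u4 + u2 * u3 + u2 * u4 + u3 * u4 ∈ A := by
    have := add_mem (add_mem (kk _ k2) m1) (mul_mem ml m2)
    convert this using 1; ring
  have E3 : u1 * u2 * u3 + u1 * u2 * u4 + u1 * u3 * u4 + u2 * u3 * u4 ∈ A := by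
    have := neg_mem (add_mem (add_mem (kk _ k1) m0) (mul_mem ml m1))
    convert this using 1; ring
  have E4 : u1 * u2 * u3 * u4 ∈ A := by
    have := add_mem (kk _ k0) (mul_mem ml m0)
    convert this using 1; ring
  refine rank24 A u1 u2 u3 u4 8 E1 E2 E3 E4 ?_
  intro B hB b1 b2 b3 b4
  have hG : ∀ u ∈ B, c * (u ^ 3 + g2 * u ^ 2 + g1 * u + g0) ∈ B := fun u hu =>
    mul_mem (hB mc) (add_mem (add_mem (add_mem (pow_mem hu _) (mul_mem (hB m2) (pow_mem hu _)))
      (mul_mem (hB m1) hu)) (hB m0))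
  have w1 : v1 ^ 2 ∈ B := by
    have h := hG u1 b1
    rw [G1] at h
    have := div_mem h (mul_mem (mul_mem (sub_mem b1 b2) (sub_mem b1 b3)) (sub_mem b1 b4))
    rwa [mul_div_cancel_right₀ _ (mul_ne_zero (mul_ne_zero d12 d13) d14)] at this
  have w2 : v2 ^ 2 ∈ B := by
    have h := neg_mem (hG u2 b2)
    rw [G2, neg_neg] at h
    have := div_mem h (mul_mem (mul_mem (sub_mem b1 b2) (sub_mem b2 b3)) (sub_mem b2 b4))
    rwa [mul_div_cancel_right₀ _ (mul_ne_zero (mul_ne_zero d12 d23) d24)] at this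
  have w3 : v3 ^ 2 ∈ B := by
    have h := hG u3 b3
    rw [G3] at h
    have := div_mem h (mul_mem (mul_mem (sub_mem b1 b3) (sub_mem b2 b3)) (sub_mem b3 b4))
    rwa [mul_div_cancel_right₀ _ (mul_ne_zero (mul_ne_zero d13 d23) d34)] at this
  refine rank8 B v1 v2 v3 0 0 0 (v1 ^ 2) (v2 ^ 2) (v3 ^ 2) (zero_mem _) (zero_mem _) (zero_mem _)
    w1 w2 w3 (by ring) (by ring) (by ring) ?_
  intro C hC t1 t2 t3
  refine H C (hB.trans hC) (hC b1) (hC b2) (hC b3) (hC b4) t1 t2 t3 ?_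
  have hDel : (u1 - u2) * (u1 - u3) * (u1 - u4) * (u2 - u3) * (u2 - u4) * (u3 - u4) ∈ C := by
    refine hC ?_
    repeat' first
      | assumption
      | refine sub_mem ?_ ?_
      | refine mul_mem ?_ ?_
  have hD0 : (u1 - u2) * (u1 - u3) * (u1 - u4) * (u2 - u3) * (u2 - u4) * (u3 - u4) ≠ 0 := by
    intro h; exact hY0 (by rw [hY, h, mul_zero])
  have := div_mem (hC (hB mY)) (mul_mem (mul_mem (mul_mem t1 t2) t3) hDel)
  convert this using 1
  rw [hY, eq_div_iff (mul_ne_zero (mul_ne_zero (mul_ne_zero hv1 hv2) hv3) hD0)]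
  ring

/-- Characteristic 2: the degree bound. -/
theorem eq2_core [CharP L 2] (A : IntermediateField K L) (u1 u2 u3 u4 z1 z2 z3 z4 : L) (Y : L)
    (d12 : u1 + u2 ≠ 0) (d13 : u1 + u3 ≠ 0) (d14 : u1 + u4 ≠ 0)
    (d23 : u2 + u3 ≠ 0) (d24 : u2 + u4 ≠ 0) (d34 : u3 + u4 ≠ 0)
    (hY : Y = z1 + z2 + z3 + z4 + (u1 / (u1 + u2) + u1 / (u1 + u3) + u1 / (u1 + u4)
      + u2 / (u2 + u3) + u2 / (u2 + u4) + u3 / (u3 + u4)))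
    (E1 : u1 + u2 + u3 + u4 ∈ A)
    (E2 : u1 * u2 + u1 * u3 + u1 * u4 + u2 * u3 + u2 * u4 + u3 * u4 ∈ A)
    (E3 : u1 * u2 * u3 + u1 * u2 * u4 + u1 * u3 * u4 + u2 * u3 * u4 ∈ A)
    (E4 : u1 * u2 * u3 * u4 ∈ A) (mY : Y ∈ A)
    (k1 : (z1 ^ 2 + z1) * u1 + (z2 ^ 2 + z2) * u2 + (z3 ^ 2 + z3) * u3 + (z4 ^ 2 + z4) * u4 ∈ A)
    (k2 : (z1 ^ 2 + z1) * u1 ^ 2 + (z2 ^ 2 + z2) * u2 ^ 2 + (z3 ^ 2 + z3) * u3 ^ 2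
      + (z4 ^ 2 + z4) * u4 ^ 2 ∈ A)
    (k3 : (z1 ^ 2 + z1) * u1 ^ 3 + (z2 ^ 2 + z2) * u2 ^ 3 + (z3 ^ 2 + z3) * u3 ^ 3
      + (z4 ^ 2 + z4) * u4 ^ 3 ∈ A)
    (H : ∀ B : IntermediateField K L, A ≤ B → u1 ∈ B → u2 ∈ B → u3 ∈ B → u4 ∈ B →
      z1 ∈ B → z2 ∈ B → z3 ∈ B → z4 ∈ B → B = ⊤) :
    Module.rank A L ≤ ((192 : ℕ) : Cardinal) := by
  refine rank24 A u1 u2 u3 u4 8 E1 E2 E3 E4 ?_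
  intro B hB b1 b2 b3 b4
  set q := u1 / (u1 + u2) + u1 / (u1 + u3) + u1 / (u1 + u4)
      + u2 / (u2 + u3) + u2 / (u2 + u4) + u3 / (u3 + u4) with hq
  have mq : q ∈ B := by
    rw [hq]
    repeat' first
      | assumption
      | refine div_mem ?_ ?_
      | refine add_mem ?_ ?_
  have neg2 : ∀ a : L, -a = a := CharTwo.neg_eq
  have two0 : (2 : L) = 0 := CharTwo.two_eq_zero
  have k0 : (z1 ^ 2 + z1) + (z2 ^ 2 + z2) + (z3 ^ 2 + z3) + (z4 ^ 2 + z4) ∈ B := by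
    have hm : Y ^ 2 + Y - (q ^ 2 + q) ∈ B :=
      sub_mem (add_mem (pow_mem (hB mY) _) (hB mY)) (add_mem (pow_mem mq _) mq)
    convert hm using 1
    rw [hY]
    linear_combination (-(z1 * z2 + z1 * z3 + z1 * z4 + z2 * z3 + z2 * z4 + z3 * z4
      + (z1 + z2 + z3 + z4) * q)) * two0
  generalize hc1 : z1 ^ 2 + z1 = c1 at *
  generalize hc2 : z2 ^ 2 + z2 = c2 at *
  generalize hc3 : z3 ^ 2 + z3 = c3 at *
  generalize hc4 : z4 ^ 2 + z4 = c4 at *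
  have s12 : u1 - u2 ≠ 0 := by rwa [sub_eq_add_neg, neg2]
  have s13 : u1 - u3 ≠ 0 := by rwa [sub_eq_add_neg, neg2]
  have s14 : u1 - u4 ≠ 0 := by rwa [sub_eq_add_neg, neg2]
  have s23 : u2 - u3 ≠ 0 := by rwa [sub_eq_add_neg, neg2]
  have s24 : u2 - u4 ≠ 0 := by rwa [sub_eq_add_neg, neg2]
  have s34 : u3 - u4 ≠ 0 := by rwa [sub_eq_add_neg, neg2]
  have gen : ∀ a b d : L, a ∈ B → b ∈ B → d ∈ B →
      c1 * ((u1 - a) * (u1 - b) * (u1 - d)) + c2 * ((u2 - a) * (u2 - b) * (u2 - d))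
      + c3 * ((u3 - a) * (u3 - b) * (u3 - d)) + c4 * ((u4 - a) * (u4 - b) * (u4 - d)) ∈ B := by
    intro a b d ha hb hd
    have hm := sub_mem (add_mem (sub_mem (hB k3)
      (mul_mem (add_mem (add_mem ha hb) hd) (hB k2)))
      (mul_mem (add_mem (add_mem (mul_mem ha hb) (mul_mem ha hd)) (mul_mem hb hd)) (hB k1)))
      (mul_mem (mul_mem (mul_mem ha hb) hd) k0)
    convert hm using 1
    ring
  have w1 : c1 ∈ B := by
    have h := div_mem (gen u2 u3 u4 b2 b3 b4)
      (mul_mem (mul_mem (sub_mem b1 b2) (sub_mem b1 b3)) (sub_mem b1 b4))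
    convert h using 1
    rw [eq_div_iff (mul_ne_zero (mul_ne_zero s12 s13) s14)]
    ring
  have w2 : c2 ∈ B := by
    have h := div_mem (gen u1 u3 u4 b1 b3 b4)
      (neg_mem (mul_mem (mul_mem (sub_mem b1 b2) (sub_mem b2 b3)) (sub_mem b2 b4)))
    convert h using 1
    rw [eq_div_iff (neg_ne_zero.2 (mul_ne_zero (mul_ne_zero s12 s23) s24))]
    ring
  have w3 : c3 ∈ B := by
    have h := div_mem (gen u1 u2 u4 b1 b2 b4)
      (mul_mem (mul_mem (sub_mem b1 b3) (sub_mem b2 b3)) (sub_mem b3 b4))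
    convert h using 1
    rw [eq_div_iff (mul_ne_zero (mul_ne_zero s13 s23) s34)]
    ring
  refine rank8 B z1 z2 z3 (-1) (-1) (-1) c1 c2 c3 (neg_mem (one_mem _)) (neg_mem (one_mem _))
    (neg_mem (one_mem _)) w1 w2 w3 (by rw [← hc1]; ring) (by rw [← hc2]; ring)
    (by rw [← hc3]; ring) ?_
  intro C hC t1 t2 t3
  refine H C (hB.trans hC) (hC b1) (hC b2) (hC b3) (hC b4) t1 t2 t3 ?_
  have := sub_mem (sub_mem (sub_mem (sub_mem (hC (hB mY)) (hC mq)) t1) t2) t3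
  convert this using 1
  rw [hY]; ring

end Char
section Final
variable {K : Type} [Field K]

/-- pair sums -/
def uu (x : Fin 8 → RFF K (Fin 8)) : Fin 4 → RFF K (Fin 8) :=
  ![x 0 + x 4, x 1 + x 5, x 2 + x 6, x 3 + x 7]
/-- pair differences -/
def vv (x : Fin 8 → RFF K (Fin 8)) : Fin 4 → RFF K (Fin 8) :=
  ![x 0 - x 4, x 1 - x 5, x 2 - x 6, x 3 - x 7]

def iE1 (u v : Fin 4 → RFF K (Fin 8)) : RFF K (Fin 8) :=
  u 0 + u 1 + u 2 + u 3

theorem iE1_mem : iE1 (uu (Xvar K (Fin 8))) (vv (Xvar K (Fin 8))) ∈ fixedSub K (Fin 8) GG := by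
  refine mem_fixed' (fun x => iE1 (uu x) (vv x)) ?_ ?_
  · intro φ x
    simp [iE1, uu, vv]
  · intro x _
    simp only [iE1, uu, vv]
    simp
    refine ⟨?_, ?_, ?_, ?_⟩ <;> ring

def iE2 (u v : Fin 4 → RFF K (Fin 8)) : RFF K (Fin 8) :=
  u 0 * u 1 + u 0 * u 2 + u 0 * u 3 + u 1 * u 2 + u 1 * u 3 + u 2 * u 3

theorem iE2_mem : iE2 (uu (Xvar K (Fin 8))) (vv (Xvar K (Fin 8))) ∈ fixedSub K (Fin 8) GG := by
  refine mem_fixed' (fun x => iE2 (uu x) (vv x)) ?_ ?_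
  · intro φ x
    simp [iE2, uu, vv]
  · intro x _
    simp only [iE2, uu, vv]
    simp
    refine ⟨?_, ?_, ?_, ?_⟩ <;> ring

def iE3 (u v : Fin 4 → RFF K (Fin 8)) : RFF K (Fin 8) :=
  u 0 * u 1 * u 2 + u 0 * u 1 * u 3 + u 0 * u 2 * u 3 + u 1 * u 2 * u 3

theorem iE3_mem : iE3 (uu (Xvar K (Fin 8))) (vv (Xvar K (Fin 8))) ∈ fixedSub K (Fin 8) GG := by
  refine mem_fixed' (fun x => iE3 (uu x) (vv x)) ?_ ?_
  · intro φ x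
    simp [iE3, uu, vv]
  · intro x _
    simp only [iE3, uu, vv]
    simp
    refine ⟨?_, ?_, ?_, ?_⟩ <;> ring

def iE4 (u v : Fin 4 → RFF K (Fin 8)) : RFF K (Fin 8) :=
  u 0 * u 1 * u 2 * u 3

theorem iE4_mem : iE4 (uu (Xvar K (Fin 8))) (vv (Xvar K (Fin 8))) ∈ fixedSub K (Fin 8) GG := by
  refine mem_fixed' (fun x => iE4 (uu x) (vv x)) ?_ ?_
  · intro φ x
    simp [iE4, uu, vv]
  · intro x _
    simp only [iE4, uu, vv]
    simp only [Matrix.cons_val]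
    refine ⟨?_, ?_, ?_, ?_⟩ <;> ring

def iC (u v : Fin 4 → RFF K (Fin 8)) : RFF K (Fin 8) :=
  v 0 ^ 2 + v 1 ^ 2 + v 2 ^ 2 + v 3 ^ 2

theorem iC_mem : iC (uu (Xvar K (Fin 8))) (vv (Xvar K (Fin 8))) ∈ fixedSub K (Fin 8) GG := by
  refine mem_fixed' (fun x => iC (uu x) (vv x)) ?_ ?_
  · intro φ x
    simp [iC, uu, vv]
  · intro x _
    simp only [iC, uu, vv]
    simp
    refine ⟨?_, ?_, ?_, ?_⟩ <;> ring

def iN2 (u v : Fin 4 → RFF K (Fin 8)) : RFF K (Fin 8) :=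
    -(v 0 ^ 2 * (u 1 + u 2 + u 3) + v 1 ^ 2 * (u 0 + u 2 + u 3) + v 2 ^ 2 * (u 0 + u 1 + u 3) + v
    3 ^ 2 * (u 0 + u 1 + u 2))

theorem iN2_mem : iN2 (uu (Xvar K (Fin 8))) (vv (Xvar K (Fin 8))) ∈ fixedSub K (Fin 8) GG := by
  refine mem_fixed' (fun x => iN2 (uu x) (vv x)) ?_ ?_
  · intro φ x
    simp [iN2, uu, vv]
  · intro x _
    simp only [iN2, uu, vv]
    simp
    refine ⟨?_, ?_, ?_, ?_⟩ <;> ring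

def iN1 (u v : Fin 4 → RFF K (Fin 8)) : RFF K (Fin 8) :=
    v 0 ^ 2 * (u 1 * u 2 + u 1 * u 3 + u 2 * u 3) + v 1 ^ 2 * (u 0 * u 2 + u 0 * u 3 + u 2 * u 3)
    + v 2 ^ 2 * (u 0 * u 1 + u 0 * u 3 + u 1 * u 3) + v 3 ^ 2 * (u 0 * u 1 + u 0 * u 2 + u 1 * u
    2)

theorem iN1_mem : iN1 (uu (Xvar K (Fin 8))) (vv (Xvar K (Fin 8))) ∈ fixedSub K (Fin 8) GG := by
  refine mem_fixed' (fun x => iN1 (uu x) (vv x)) ?_ ?_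
  · intro φ x
    simp [iN1, uu, vv]
  · intro x _
    simp only [iN1, uu, vv]
    simp
    refine ⟨?_, ?_, ?_, ?_⟩ <;> ring

def iN0 (u v : Fin 4 → RFF K (Fin 8)) : RFF K (Fin 8) :=
    -(v 0 ^ 2 * (u 1 * u 2 * u 3) + v 1 ^ 2 * (u 0 * u 2 * u 3) + v 2 ^ 2 * (u 0 * u 1 * u 3) + v
    3 ^ 2 * (u 0 * u 1 * u 2))

theorem iN0_mem : iN0 (uu (Xvar K (Fin 8))) (vv (Xvar K (Fin 8))) ∈ fixedSub K (Fin 8) GG := by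
  refine mem_fixed' (fun x => iN0 (uu x) (vv x)) ?_ ?_
  · intro φ x
    simp [iN0, uu, vv]
  · intro x _
    simp only [iN0, uu, vv]
    simp
    refine ⟨?_, ?_, ?_, ?_⟩ <;> ring

def iY (u v : Fin 4 → RFF K (Fin 8)) : RFF K (Fin 8) :=
    v 0 * v 1 * v 2 * v 3 * ((u 0 - u 1) * (u 0 - u 2) * (u 0 - u 3) * (u 1 - u 2) * (u 1 - u 3) *
    (u 2 - u 3))

theorem iY_mem : iY (uu (Xvar K (Fin 8))) (vv (Xvar K (Fin 8))) ∈ fixedSub K (Fin 8) GG := by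
  refine mem_fixed' (fun x => iY (uu x) (vv x)) ?_ ?_
  · intro φ x
    simp [iY, uu, vv]
  · intro x _
    simp only [iY, uu, vv]
    simp
    rw [add_comm (x 4) (x 0), add_comm (x 5) (x 1), ← neg_sub (x 0) (x 4), ← neg_sub (x 1) (x 5)]
    generalize x 0 + x 4 = u0
    generalize x 1 + x 5 = u1
    generalize x 2 + x 6 = u2
    generalize x 3 + x 7 = u3
    generalize x 0 - x 4 = v0
    generalize x 1 - x 5 = v1
    generalize x 2 - x 6 = v2
    generalize x 3 - x 7 = v3
    refine ⟨?_, ?_, ?_, ?_⟩ <;> ring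

theorem mem_of_uv (h2 : (2 : K) ≠ 0) (B : IntermediateField K (RFF K (Fin 8)))
    (x y : RFF K (Fin 8)) (h : x + y ∈ B) (h' : x - y ∈ B) : x ∈ B ∧ y ∈ B := by
  have h2L : (2 : RFF K (Fin 8)) ≠ 0 := by
    intro h
    apply h2
    apply (algebraMap K (RFF K (Fin 8))).injective
    rw [map_ofNat, map_zero]
    exact h
  have m2 : (2 : RFF K (Fin 8)) ∈ B := by
    have := add_mem (one_mem B) (one_mem B)
    convert this using 1; norm_num
  constructor
  · have := div_mem (add_mem h h') m2
    convert this using 1; field_simp; ring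
  · have := div_mem (sub_mem h h') m2
    convert this using 1; field_simp; ring

theorem sum_ne (i i' j j' : Fin 8) (h1 : i ≠ i') (h2 : i ≠ j) (h3 : i ≠ j') :
    Xvar K (Fin 8) i + Xvar K (Fin 8) i' + (Xvar K (Fin 8) j + Xvar K (Fin 8) j') ≠ 0 := by
  have := ne_zero_of_eval (K := K) (.X i + .X i' + (.X j + .X j')) (Pi.single i 1)
    (by simp [Pi.single_apply, h1.symm, h2.symm, h3.symm])
  simpa [Xvar] using this

theorem diff_ne (i i' j j' : Fin 8) (h1 : i ≠ i') (h2 : i ≠ j) (h3 : i ≠ j') :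
    Xvar K (Fin 8) i + Xvar K (Fin 8) i' - (Xvar K (Fin 8) j + Xvar K (Fin 8) j') ≠ 0 := by
  have := ne_zero_of_eval (K := K) (.X i + .X i' - (.X j + .X j')) (Pi.single i 1)
    (by simp [Pi.single_apply, h1.symm, h2.symm, h3.symm])
  simpa [Xvar] using this

theorem pair_ne (i i' : Fin 8) (h1 : i ≠ i') :
    Xvar K (Fin 8) i + Xvar K (Fin 8) i' ≠ 0 := by
  have := ne_zero_of_eval (K := K) (.X i + .X i') (Pi.single i 1)
    (by simp [Pi.single_apply, h1.symm])
  simpa [Xvar] using this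

theorem iC_ne : iC (uu (Xvar K (Fin 8))) (vv (Xvar K (Fin 8))) ≠ 0 := by
  have := ne_zero_of_eval (K := K) ((.X 0 - .X 4) ^ 2 + (.X 1 - .X 5) ^ 2 + (.X 2 - .X 6) ^ 2 +
    (.X 3 - .X 7) ^ 2) (Pi.single 0 1) (by simp [Pi.single_apply])
  simpa [Xvar, iC, vv] using this

theorem iY_ne : iY (uu (Xvar K (Fin 8))) (vv (Xvar K (Fin 8))) ≠ 0 := by
  have hv : ∀ i j : Fin 8, i ≠ j → Xvar K (Fin 8) i - Xvar K (Fin 8) j ≠ 0 :=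
    fun i j h => sub_ne_zero.2 (Xvar_inj.ne h)
  unfold iY
  refine mul_ne_zero (mul_ne_zero (mul_ne_zero (mul_ne_zero ?_ ?_) ?_) ?_)
    (mul_ne_zero (mul_ne_zero (mul_ne_zero (mul_ne_zero (mul_ne_zero ?_ ?_) ?_) ?_) ?_) ?_)
  · exact hv 0 4 (by decide)
  · exact hv 1 5 (by decide)
  · exact hv 2 6 (by decide)
  · exact hv 3 7 (by decide)
  · exact diff_ne 0 4 1 5 (by decide) (by decide) (by decide)
  · exact diff_ne 0 4 2 6 (by decide) (by decide) (by decide)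
  · exact diff_ne 0 4 3 7 (by decide) (by decide) (by decide)
  · exact diff_ne 1 5 2 6 (by decide) (by decide) (by decide)
  · exact diff_ne 1 5 3 7 (by decide) (by decide) (by decide)
  · exact diff_ne 2 6 3 7 (by decide) (by decide) (by decide)

theorem case_ne2 (h2 : (2 : K) ≠ 0) : IsRatExt K (fixedSub K (Fin 8) GG) := by
  have me1 := iE1_mem (K := K)
  have me2 := iE2_mem (K := K)
  have me3 := iE3_mem (K := K)
  have me4 := iE4_mem (K := K)
  have mc := iC_mem (K := K)
  have mn2 := iN2_mem (K := K)
  have mn1 := iN1_mem (K := K)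
  have mn0 := iN0_mem (K := K)
  have mY := iY_mem (K := K)
  have hc0 := iC_ne (K := K)
  have hY0 := iY_ne (K := K)
  have hx : ∀ B : IntermediateField K (RFF K (Fin 8)), (∀ i, uu (Xvar K (Fin 8)) i ∈ B) →
      (∀ i, vv (Xvar K (Fin 8)) i ∈ B) → B = ⊤ := by
    intro B hu hv
    apply eq_top_of_X
    have a0 := mem_of_uv h2 B _ _ (hu 0) (hv 0)
    have a1 := mem_of_uv h2 B _ _ (hu 1) (hv 1)
    have a2 := mem_of_uv h2 B _ _ (hu 2) (hv 2)
    have a3 := mem_of_uv h2 B _ _ (hu 3) (hv 3)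
    intro i
    fin_cases i
    exacts [a0.1, a1.1, a2.1, a3.1, a0.2, a1.2, a2.2, a3.2]
  generalize uu (Xvar K (Fin 8)) = u at *
  generalize vv (Xvar K (Fin 8)) = v at *
  obtain ⟨c, hc⟩ : ∃ c, c = iC u v := ⟨_, rfl⟩
  obtain ⟨Y, hY⟩ : ∃ c, c = iY u v := ⟨_, rfl⟩
  obtain ⟨g2, hg2⟩ : ∃ g, g = iN2 u v / c := ⟨_, rfl⟩
  obtain ⟨g1, hg1⟩ : ∃ g, g = iN1 u v / c := ⟨_, rfl⟩
  obtain ⟨g0, hg0⟩ : ∃ g, g = iN0 u v / c := ⟨_, rfl⟩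
  obtain ⟨l, hl⟩ : ∃ l, l = -(iE1 u v) - g2 := ⟨_, rfl⟩
  obtain ⟨y, hy⟩ : ∃ y, y = Y / c ^ 2 := ⟨_, rfl⟩
  rw [← hc] at mc hc0
  rw [← hY] at mY hY0
  have mg2 : g2 ∈ fixedSub K (Fin 8) GG := hg2 ▸ div_mem mn2 mc
  have mg1 : g1 ∈ fixedSub K (Fin 8) GG := hg1 ▸ div_mem mn1 mc
  have mg0 : g0 ∈ fixedSub K (Fin 8) GG := hg0 ▸ div_mem mn0 mc
  have ml : l ∈ fixedSub K (Fin 8) GG := hl ▸ sub_mem (neg_mem me1) mg2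
  have my : y ∈ fixedSub K (Fin 8) GG := hy ▸ div_mem mY (pow_mem mc _)
  let t : Fin 8 → RFF K (Fin 8) := ![c, g2, g1, g0, l, y⁻¹ * (iE2 u v - g1 - l * g2),
    y⁻¹ * (-(iE3 u v) - g0 - l * g1), y⁻¹ * (iE4 u v - l * g0)]
  have ht : ∀ i, t i ∈ IntermediateField.adjoin K (Set.range t) := fun i =>
    IntermediateField.subset_adjoin _ _ ⟨i, rfl⟩
  refine main_reduction GG card_GG t ?_ ?_
  · intro i
    fin_cases i
    · exact mc
    · exact mg2
    · exact mg1
    · exact mg0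
    · exact ml
    · exact mul_mem (inv_mem my) (sub_mem (sub_mem me2 mg1) (mul_mem ml mg2))
    · exact mul_mem (inv_mem my) (sub_mem (sub_mem (neg_mem me3) mg0) (mul_mem ml mg1))
    · exact mul_mem (inv_mem my) (sub_mem me4 (mul_mem ml mg0))
  · refine ne2_core _ (u 0) (u 1) (u 2) (u 3) (v 0) (v 1) (v 2) (v 3) c _ _ _ Y g2 g1 g0 l y
      hc rfl rfl rfl hY hc0 hY0 hg2 hg1 hg0 hl hy (ht 0) (ht 1) (ht 2) (ht 3) (ht 4) (ht 5) (ht 6)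
      (ht 7) ?_
    intro B _ u0 u1 u2 u3 v0 v1 v2 v3
    apply hx
    · intro i; fin_cases i <;> assumption
    · intro i; fin_cases i <;> assumption

/-- the ratios used in characteristic 2 -/
def zz (x : Fin 8 → RFF K (Fin 8)) : Fin 4 → RFF K (Fin 8) :=
  ![x 0 / (x 0 + x 4), x 1 / (x 1 + x 5), x 2 / (x 2 + x 6), x 3 / (x 3 + x 7)]

def jY (u z : Fin 4 → RFF K (Fin 8)) : RFF K (Fin 8) :=
  z 0 + z 1 + z 2 + z 3 + (u 0 / (u 0 + u 1) + u 0 / (u 0 + u 2) + u 0 / (u 0 + u 3)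
      + u 1 / (u 1 + u 2) + u 1 / (u 1 + u 3) + u 2 / (u 2 + u 3))

def jB (n : ℕ) (u z : Fin 4 → RFF K (Fin 8)) : RFF K (Fin 8) :=
  (z 0 ^ 2 + z 0) * u 0 ^ n + (z 1 ^ 2 + z 1) * u 1 ^ n + (z 2 ^ 2 + z 2) * u 2 ^ n
    + (z 3 ^ 2 + z 3) * u 3 ^ n

theorem ratio_swap (a b : RFF K (Fin 8)) (h : a + b ≠ 0) : b / (a + b) = 1 - a / (a + b) := by
  field_simp; ring

theorem ratio_swap' (a b : RFF K (Fin 8)) (h : a + b ≠ 0) : b / (b + a) = 1 - a / (a + b) := by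
  rw [add_comm b a]; exact ratio_swap a b h

theorem jY_mem (two0 : (2 : RFF K (Fin 8)) = 0) :
    jY (uu (Xvar K (Fin 8))) (zz (Xvar K (Fin 8))) ∈ fixedSub K (Fin 8) GG := by
  refine mem_fixed' (fun x => jY (uu x) (zz x)) ?_ ?_
  · intro φ x
    simp [jY, uu, zz]
  · intro x hx
    have z0 : x 4 / (x 0 + x 4) = 1 - x 0 / (x 0 + x 4) :=
      ratio_swap _ _ (hx ▸ pair_ne 0 4 (by decide))
    have z1 : x 5 / (x 1 + x 5) = 1 - x 1 / (x 1 + x 5) :=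
      ratio_swap _ _ (hx ▸ pair_ne 1 5 (by decide))
    have q01 := ratio_swap' (x 0 + x 4) (x 1 + x 5)
      (hx ▸ sum_ne 0 4 1 5 (by decide) (by decide) (by decide))
    have q12 := ratio_swap' (x 1 + x 5) (x 2 + x 6)
      (hx ▸ sum_ne 1 5 2 6 (by decide) (by decide) (by decide))
    have q13 := ratio_swap' (x 1 + x 5) (x 3 + x 7)
      (hx ▸ sum_ne 1 5 3 7 (by decide) (by decide) (by decide))
    have q23 := ratio_swap' (x 2 + x 6) (x 3 + x 7)
      (hx ▸ sum_ne 2 6 3 7 (by decide) (by decide) (by decide))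
    simp only [jY, uu, zz]
    simp
    simp only [add_comm (x 4) (x 0), add_comm (x 5) (x 1), z0, z1, q01, q12, q13, q23]
    refine ⟨?_, ?_, ?_, ?_⟩
    · linear_combination (1 - x 0 / (x 0 + x 4) - x 1 / (x 1 + x 5)) * two0
    · linear_combination (1 - (x 0 + x 4) / (x 0 + x 4 + (x 1 + x 5))
        - (x 2 + x 6) / (x 2 + x 6 + (x 3 + x 7))) * two0
    · linear_combination (1 - (x 1 + x 5) / (x 1 + x 5 + (x 2 + x 6))
        - (x 1 + x 5) / (x 1 + x 5 + (x 3 + x 7))) * two0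
    · linear_combination (1 - x 0 / (x 0 + x 4)
        - (x 2 + x 6) / (x 2 + x 6 + (x 3 + x 7))) * two0

theorem jB_mem (two0 : (2 : RFF K (Fin 8)) = 0) (n : ℕ) :
    jB n (uu (Xvar K (Fin 8))) (zz (Xvar K (Fin 8))) ∈ fixedSub K (Fin 8) GG := by
  refine mem_fixed' (fun x => jB n (uu x) (zz x)) ?_ ?_
  · intro φ x
    simp [jB, uu, zz]
  · intro x hx
    have z0 : x 4 / (x 0 + x 4) = 1 - x 0 / (x 0 + x 4) :=
      ratio_swap _ _ (hx ▸ pair_ne 0 4 (by decide))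
    have z1 : x 5 / (x 1 + x 5) = 1 - x 1 / (x 1 + x 5) :=
      ratio_swap _ _ (hx ▸ pair_ne 1 5 (by decide))
    simp only [jB, uu, zz]
    simp only [Matrix.cons_val]
    simp only [add_comm (x 4) (x 0), add_comm (x 5) (x 1), z0, z1]
    generalize x 0 / (x 0 + x 4) = a
    generalize x 1 / (x 1 + x 5) = b
    generalize x 2 / (x 2 + x 6) = c
    generalize x 3 / (x 3 + x 7) = d
    generalize (x 0 + x 4) ^ n = a'
    generalize (x 1 + x 5) ^ n = b'
    generalize (x 2 + x 6) ^ n = c'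
    generalize (x 3 + x 7) ^ n = d'
    refine ⟨?_, ?_, ?_, ?_⟩
    · linear_combination ((1 - 2 * a) * a' + (1 - 2 * b) * b') * two0
    · ring
    · ring
    · linear_combination ((1 - 2 * a) * a') * two0

theorem case_eq2 (h2 : (2 : K) = 0) : IsRatExt K (fixedSub K (Fin 8) GG) := by
  have two0 : (2 : RFF K (Fin 8)) = 0 := by
    have := congrArg (algebraMap K (RFF K (Fin 8))) h2
    rw [map_ofNat, map_zero] at this; exact this
  have : CharP (RFF K (Fin 8)) 2 := CharTwo.of_one_ne_zero_of_two_eq_zero one_ne_zero two0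
  have me1 := iE1_mem (K := K)
  have me2 := iE2_mem (K := K)
  have me3 := iE3_mem (K := K)
  have me4 := iE4_mem (K := K)
  have mY := jY_mem (K := K) two0
  have mB := jB_mem (K := K) two0
  have hx : ∀ B : IntermediateField K (RFF K (Fin 8)), (∀ i, uu (Xvar K (Fin 8)) i ∈ B) →
      (∀ i, zz (Xvar K (Fin 8)) i ∈ B) → B = ⊤ := by
    intro B hu hz
    apply eq_top_of_X
    have key : ∀ i j : Fin 8, i ≠ j → Xvar K (Fin 8) i + Xvar K (Fin 8) j ∈ B →
        Xvar K (Fin 8) i / (Xvar K (Fin 8) i + Xvar K (Fin 8) j) ∈ B →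
        Xvar K (Fin 8) i ∈ B ∧ Xvar K (Fin 8) j ∈ B := by
      intro i j hij h h'
      have hi := mul_mem h' h
      rw [div_mul_cancel₀ _ (pair_ne i j hij)] at hi
      have hj := sub_mem h hi
      rw [add_sub_cancel_left] at hj
      exact ⟨hi, hj⟩
    have a0 := key 0 4 (by decide) (hu 0) (hz 0)
    have a1 := key 1 5 (by decide) (hu 1) (hz 1)
    have a2 := key 2 6 (by decide) (hu 2) (hz 2)
    have a3 := key 3 7 (by decide) (hu 3) (hz 3)
    intro i
    fin_cases i
    exacts [a0.1, a1.1, a2.1, a3.1, a0.2, a1.2, a2.2, a3.2]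
  have d01 : uu (Xvar K (Fin 8)) 0 + uu (Xvar K (Fin 8)) 1 ≠ 0 :=
    sum_ne 0 4 1 5 (by decide) (by decide) (by decide)
  have d02 : uu (Xvar K (Fin 8)) 0 + uu (Xvar K (Fin 8)) 2 ≠ 0 :=
    sum_ne 0 4 2 6 (by decide) (by decide) (by decide)
  have d03 : uu (Xvar K (Fin 8)) 0 + uu (Xvar K (Fin 8)) 3 ≠ 0 :=
    sum_ne 0 4 3 7 (by decide) (by decide) (by decide)
  have d12 : uu (Xvar K (Fin 8)) 1 + uu (Xvar K (Fin 8)) 2 ≠ 0 :=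
    sum_ne 1 5 2 6 (by decide) (by decide) (by decide)
  have d13 : uu (Xvar K (Fin 8)) 1 + uu (Xvar K (Fin 8)) 3 ≠ 0 :=
    sum_ne 1 5 3 7 (by decide) (by decide) (by decide)
  have d23 : uu (Xvar K (Fin 8)) 2 + uu (Xvar K (Fin 8)) 3 ≠ 0 :=
    sum_ne 2 6 3 7 (by decide) (by decide) (by decide)
  generalize uu (Xvar K (Fin 8)) = u at *
  generalize zz (Xvar K (Fin 8)) = z at *
  generalize vv (Xvar K (Fin 8)) = v at *
  let t : Fin 8 → RFF K (Fin 8) := ![iE1 u v, iE2 u v, iE3 u v, iE4 u v, jY u z,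
    jB 1 u z, jB 2 u z, jB 3 u z]
  have ht : ∀ i, t i ∈ IntermediateField.adjoin K (Set.range t) := fun i =>
    IntermediateField.subset_adjoin _ _ ⟨i, rfl⟩
  refine main_reduction GG card_GG t ?_ ?_
  · intro i
    fin_cases i
    exacts [me1, me2, me3, me4, mY, mB 1, mB 2, mB 3]
  · refine eq2_core _ (u 0) (u 1) (u 2) (u 3) (z 0) (z 1) (z 2) (z 3) _ d01 d02 d03 d12 d13 d23
      rfl (ht 0) (ht 1) (ht 2) (ht 3) (ht 4) ?_ (ht 6) (ht 7) ?_
    · have h5 : jB 1 u z ∈ IntermediateField.adjoin K (Set.range t) := ht 5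
      simpa only [jB, pow_one] using h5
    intro B _ u0 u1 u2 u3 v0 v1 v2 v3
    apply hx
    · intro i; fin_cases i <;> assumption
    · intro i; fin_cases i <;> assumption

end Final

/-- **Rationality for `G₄₀`.** For any field `K`, the subgroup `G₄₀ ⊆ S₈` of order 192 generated by `(1,5)(2,6)`, `σ₁ = (1,2)(3,4)(5,6)(7,8)`, `φ̃₁ = (2,3,4)(6,7,8)` and `(1,5)(3,4)(7,8)` has `K`-rational fixed field. -/
theorem rationality_G40 (K : Type) [Field K] :
    IsRatExt K ↥(fixedSub K (Fin 8) (Subgroup.closure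
      {Equiv.swap (0 : Fin 8) 4 * Equiv.swap 1 5,
       Equiv.swap (0 : Fin 8) 1 * Equiv.swap 2 3 * Equiv.swap 4 5 * Equiv.swap 6 7,
       (Equiv.swap (1 : Fin 8) 2 * Equiv.swap 2 3) * (Equiv.swap (5 : Fin 8) 6 * Equiv.swap 6 7),
       Equiv.swap (0 : Fin 8) 4 * Equiv.swap 2 3 * Equiv.swap 6 7})) := by
  by_cases h2 : (2 : K) = 0
  · exact case_eq2 h2
  · exact case_ne2 h2
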